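/- arXiv:2307.07257 — 3 statements merged into one kernel-verified Lean document; each statement's English description precedes it below -/
import Mathlib

section
/- Let σ > 0, T > 0 and τ₀ ∈ [0,T). Let B : [0,T]×ℝ^d → ℝ^m be bounded, with each B(t,·) horizontally differentiable and sup over (t,x) of |div_G B(t,·)(x)| finite. Let N : ℝ^d → [0,∞) be such that N² ∈ C²(ℝ^d) and, for some constant C ≥ 0, |∇_G(N²)(x)|² ≤ C N(x)² and |Δ_G(N²)(x)| ≤ C for all x ∈ ℝ^d. Then for every β₁ > 0 there exist β̄ > 0 and τ ∈ (τ₀, T] such that the function Φ(t,x) := exp(−(β₁ + β̄(t−τ₀))(N(x)² + 1)) satisfies ∂_t Φ(t,x) + σ Δ_G Φ(t,·)(x) + B(t,x)·∇_G Φ(t,·)(x) + div_G B(t,·)(x) · Φ(t,x) ≤ 0 for all (t,x) ∈ (τ₀, τ) × ℝ^d. -/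
open MeasureTheory Set

noncomputable section

/-- Derivative of `f : ℝ^d → ℝ` along the vector field `X` (horizontal derivative `X f`). -/
def vderiv {d : ℕ} (X : (Fin d → ℝ) → (Fin d → ℝ)) (f : (Fin d → ℝ) → ℝ)
    (x : Fin d → ℝ) : ℝ := fderiv ℝ f x (X x)

/-- Squared Euclidean norm of the horizontal gradient `∇_G f`. -/
def hgradSq {d m : ℕ} (X : Fin m → (Fin d → ℝ) → (Fin d → ℝ)) (f : (Fin d → ℝ) → ℝ)
    (x : Fin d → ℝ) : ℝ := ∑ i, (vderiv (X i) f x) ^ 2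

/-- Horizontal Laplacian `Δ_G f = Σ X_i (X_i f)`. -/
def hLap {d m : ℕ} (X : Fin m → (Fin d → ℝ) → (Fin d → ℝ)) (f : (Fin d → ℝ) → ℝ)
    (x : Fin d → ℝ) : ℝ := ∑ i, vderiv (X i) (vderiv (X i) f) x

/-- Horizontal divergence `div_G B = Σ X_i B_i`. -/
def hdiv {d m : ℕ} (X : Fin m → (Fin d → ℝ) → (Fin d → ℝ)) (B : (Fin d → ℝ) → Fin m → ℝ)
    (x : Fin d → ℝ) : ℝ := ∑ i, vderiv (X i) (fun y => B y i) x

/-- Euclidean divergence `Σ_j ∂_{x_j} X^j` of a vector field on `ℝ^d`. -/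
def ediv {d : ℕ} (X : (Fin d → ℝ) → (Fin d → ℝ)) (x : Fin d → ℝ) : ℝ :=
  ∑ j, fderiv ℝ X x (Pi.single j 1) j

/-- Anisotropic dilations `δ_λ x = (λ^{w_1} x_1, …, λ^{w_d} x_d)`. -/
def dil {d : ℕ} (w : Fin d → ℕ) (l : ℝ) (x : Fin d → ℝ) : Fin d → ℝ :=
  fun i => l ^ (w i) * x i

/-- A vector field is `δ`-homogeneous of degree one. -/
def homogOne {d : ℕ} (w : Fin d → ℕ) (X : (Fin d → ℝ) → (Fin d → ℝ)) : Prop :=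
  ∀ l : ℝ, 0 < l → ∀ x, fderiv ℝ (dil w l) x (X x) = l • X (dil w l x)

/-! For `b` affine in time with slope `β`, applying `∂_t + σ Δ_G + B · ∇_G + c` to `exp (-b W)`
multiplies it by `-β W + σ (b² |∇_G W|² - b Δ_G W) - b B · ∇_G W + c`. If `|∇_G W|²`, `Δ_G W`,
`|B|²` and `c` are all controlled by `W`, everything but the first term is at most `R W`, where `R`
depends only on an upper bound for `|b|`. Hence `β ≥ R` works on a time interval of length at most
`1 / β`, on which `b` moves by at most `1`, so that `R` can be fixed before `β`. -/

section HorizontalCalculus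

variable {d m : ℕ} {f g : (Fin d → ℝ) → ℝ} {x : Fin d → ℝ} {φ φ' : ℝ → ℝ}

lemma vderiv_comp (Y : (Fin d → ℝ) → (Fin d → ℝ)) {c : ℝ} (hφ : HasDerivAt φ c (f x))
    (hf : DifferentiableAt ℝ f x) :
    vderiv Y (fun y => φ (f y)) x = c * vderiv Y f x := by
  have h : fderiv ℝ (fun y => φ (f y)) x = c • fderiv ℝ f x :=
    (hφ.comp_hasFDerivAt x hf.hasFDerivAt).fderiv
  simp only [vderiv, h, smul_apply, smul_eq_mul]

lemma vderiv_mul (Y : (Fin d → ℝ) → (Fin d → ℝ)) (hf : DifferentiableAt ℝ f x)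
    (hg : DifferentiableAt ℝ g x) :
    vderiv Y (fun y => f y * g y) x = f x * vderiv Y g x + g x * vderiv Y f x := by
  simp only [vderiv, fderiv_fun_mul hf hg, add_apply,
    smul_apply, smul_eq_mul]

lemma vderiv_add_const (Y : (Fin d → ℝ) → (Fin d → ℝ)) (f : (Fin d → ℝ) → ℝ) (c : ℝ) :
    vderiv Y (fun y => f y + c) = vderiv Y f := by
  funext x
  simp only [vderiv, fderiv_add_const]

lemma differentiable_vderiv {Y : (Fin d → ℝ) → (Fin d → ℝ)} (hY : Differentiable ℝ Y)
    (hf : ContDiff ℝ 2 f) : Differentiable ℝ (vderiv Y f) :=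
  ((hf.fderiv_right (m := 1) (by norm_num)).differentiable one_ne_zero).clm_apply hY

lemma vderiv_vderiv_comp {Y : (Fin d → ℝ) → (Fin d → ℝ)} {c : ℝ}
    (hφ : ∀ s, HasDerivAt φ (φ' s) s) (hφ' : HasDerivAt φ' c (f x))
    (hY : Differentiable ℝ Y) (hf : ContDiff ℝ 2 f) :
    vderiv Y (vderiv Y fun y => φ (f y)) x
      = c * vderiv Y f x ^ 2 + φ' (f x) * vderiv Y (vderiv Y f) x := by
  have hfd : Differentiable ℝ f := hf.differentiable two_ne_zero
  have first : (vderiv Y fun y => φ (f y)) = fun y => φ' (f y) * vderiv Y f y :=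
    funext fun y => vderiv_comp Y (hφ (f y)) (hfd y)
  have hφ'f : DifferentiableAt ℝ (fun y => φ' (f y)) x :=
    hφ'.differentiableAt.comp x (hfd x)
  rw [first, vderiv_mul Y hφ'f (differentiable_vderiv hY hf x), vderiv_comp Y hφ' (hfd x)]
  ring

lemma hgradSq_nonneg (X : Fin m → (Fin d → ℝ) → (Fin d → ℝ)) (f : (Fin d → ℝ) → ℝ)
    (x : Fin d → ℝ) : 0 ≤ hgradSq X f x :=
  Finset.sum_nonneg fun _ _ => sq_nonneg _

lemma hgradSq_add_const (X : Fin m → (Fin d → ℝ) → (Fin d → ℝ)) (f : (Fin d → ℝ) → ℝ) (c : ℝ) :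
    hgradSq X (fun y => f y + c) = hgradSq X f := by
  funext x
  simp only [hgradSq, vderiv_add_const]

lemma hLap_add_const (X : Fin m → (Fin d → ℝ) → (Fin d → ℝ)) (f : (Fin d → ℝ) → ℝ) (c : ℝ) :
    hLap X (fun y => f y + c) = hLap X f := by
  funext x
  simp only [hLap, vderiv_add_const]

lemma hLap_comp {X : Fin m → (Fin d → ℝ) → (Fin d → ℝ)} {c : ℝ}
    (hφ : ∀ s, HasDerivAt φ (φ' s) s) (hφ' : HasDerivAt φ' c (f x))
    (hX : ∀ i, Differentiable ℝ (X i)) (hf : ContDiff ℝ 2 f) :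
    hLap X (fun y => φ (f y)) x = c * hgradSq X f x + φ' (f x) * hLap X f x := by
  simp only [hLap, hgradSq, Finset.mul_sum, ← Finset.sum_add_distrib]
  exact Finset.sum_congr rfl fun i _ => vderiv_vderiv_comp hφ hφ' (hX i) hf

end HorizontalCalculus

section Exponential

variable {d m : ℕ} {f : (Fin d → ℝ) → ℝ} {x : Fin d → ℝ}

lemma hasDerivAt_exp_const_mul (a s : ℝ) :
    HasDerivAt (fun r => Real.exp (a * r)) (a * Real.exp (a * s)) s := by
  simpa only [id_eq, mul_one, mul_comm] using ((hasDerivAt_id s).const_mul a).exp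

lemma vderiv_exp_const_mul (Y : (Fin d → ℝ) → (Fin d → ℝ)) (hf : DifferentiableAt ℝ f x) (a : ℝ) :
    vderiv Y (fun y => Real.exp (a * f y)) x = a * Real.exp (a * f x) * vderiv Y f x :=
  vderiv_comp Y (hasDerivAt_exp_const_mul a (f x)) hf

lemma hLap_exp_const_mul {X : Fin m → (Fin d → ℝ) → (Fin d → ℝ)}
    (hX : ∀ i, Differentiable ℝ (X i)) (hf : ContDiff ℝ 2 f) (a : ℝ) (x : Fin d → ℝ) :
    hLap X (fun y => Real.exp (a * f y)) x
      = (a ^ 2 * hgradSq X f x + a * hLap X f x) * Real.exp (a * f x) := by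
  rw [hLap_comp (hasDerivAt_exp_const_mul a) ((hasDerivAt_exp_const_mul a (f x)).const_mul a) hX hf]
  ring

lemma deriv_exp_neg_affine_mul (β₁ β τ₀ w t : ℝ) :
    deriv (fun s : ℝ => Real.exp (-(β₁ + β * (s - τ₀)) * w)) t
      = -(β * w) * Real.exp (-(β₁ + β * (t - τ₀)) * w) := by
  have affine : HasDerivAt (fun s : ℝ => -(β₁ + β * (s - τ₀)) * w) (-(β * 1) * w) t :=
    (((((hasDerivAt_id t).sub_const τ₀).const_mul β).const_add β₁).neg).mul_const w
  rw [affine.exp.deriv]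
  ring

end Exponential

lemma abs_sum_mul_le_half_sum_sq {ι : Type*} (s : Finset ι) (u v : ι → ℝ) :
    |∑ i ∈ s, u i * v i| ≤ (∑ i ∈ s, u i ^ 2 + ∑ i ∈ s, v i ^ 2) / 2 := by
  rw [← Finset.sum_add_distrib, Finset.sum_div]
  refine (Finset.abs_sum_le_sum_abs _ _).trans (Finset.sum_le_sum fun i _ => ?_)
  rw [abs_le]
  constructor <;> linarith [sq_nonneg (u i + v i), sq_nonneg (u i - v i)]

lemma sum_sq_le_of_abs_le {ι : Type*} [Fintype ι] {u : ι → ℝ} {M : ℝ} (hu : ∀ i, |u i| ≤ M) :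
    ∑ i, u i ^ 2 ≤ Fintype.card ι * M ^ 2 := by
  simpa only [Finset.card_univ, nsmul_eq_mul] using
    Finset.sum_le_card_nsmul Finset.univ _ (M ^ 2) fun i _ =>
      sq_le_sq.2 ((hu i).trans (le_abs_self M))

/-- A Lyapunov weight for the fields `X`: a nonnegative `C²` function `W` whose squared horizontal
gradient and horizontal Laplacian are at most `C W`. It serves as the exponent of the subsolutions
`exp (-b W)`; the model case is `W = N² + 1` for a homogeneous norm `N`. -/
structure IsLyapunovWeight {d m : ℕ} (X : Fin m → (Fin d → ℝ) → (Fin d → ℝ)) (C : ℝ)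
    (W : (Fin d → ℝ) → ℝ) : Prop where
  contDiff : ContDiff ℝ 2 W
  nonneg : ∀ x, 0 ≤ W x
  hgradSq_le : ∀ x, hgradSq X W x ≤ C * W x
  abs_hLap_le : ∀ x, |hLap X W x| ≤ C * W x

/-- The constant `R` such that, for a Lyapunov weight `W` with constant `C` and `|a| ≤ A`, applying
`σ Δ_G + B · ∇_G + c` to `exp (a W)` gives at most `R W exp (a W)` when `|B|² ≤ M W`, `c ≤ K W`. -/
def lyapunovRate (σ C M K A : ℝ) : ℝ := |σ| * (A ^ 2 * C + A * C) + A * ((M + C) / 2) + K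

namespace IsLyapunovWeight

variable {d m : ℕ} {X : Fin m → (Fin d → ℝ) → (Fin d → ℝ)} {C : ℝ} {W : (Fin d → ℝ) → ℝ}

lemma add_one_of_hLap_bounded {g : (Fin d → ℝ) → ℝ} (hg : ContDiff ℝ 2 g) (hg0 : ∀ x, 0 ≤ g x)
    (hgrad : ∀ x, hgradSq X g x ≤ C * g x) (hlap : ∀ x, |hLap X g x| ≤ C) :
    IsLyapunovWeight X C fun x => g x + 1 where
  contDiff := hg.add contDiff_const
  nonneg x := by linarith [hg0 x]
  hgradSq_le x := by
    have hC : 0 ≤ C := (abs_nonneg _).trans (hlap x)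
    rw [hgradSq_add_const]
    linarith [hgrad x]
  abs_hLap_le x := by
    have hC : 0 ≤ C := (abs_nonneg _).trans (hlap x)
    rw [hLap_add_const]
    linarith [hlap x, mul_nonneg hC (hg0 x)]

lemma abs_diffusion_le (hW : IsLyapunovWeight X C W) {a A : ℝ} (ha : |a| ≤ A) (x : Fin d → ℝ) :
    |a ^ 2 * hgradSq X W x + a * hLap X W x| ≤ (A ^ 2 * C + A * C) * W x := by
  have hA : 0 ≤ A := (abs_nonneg a).trans ha
  have hgrad : |a ^ 2 * hgradSq X W x| ≤ A ^ 2 * (C * W x) := by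
    rw [abs_mul, abs_pow, abs_of_nonneg (hgradSq_nonneg X W x)]
    gcongr
    · exact hgradSq_nonneg X W x
    · exact hW.hgradSq_le x
  have hlap : |a * hLap X W x| ≤ A * (C * W x) := by
    rw [abs_mul]
    gcongr
    exact hW.abs_hLap_le x
  linarith [abs_add_le (a ^ 2 * hgradSq X W x) (a * hLap X W x)]

lemma abs_drift_le (hW : IsLyapunovWeight X C W) {a A M : ℝ} (ha : |a| ≤ A) {x : Fin d → ℝ}
    {v : Fin m → ℝ} (hv : ∑ i, v i ^ 2 ≤ M * W x) :
    |a * ∑ i, v i * vderiv (X i) W x| ≤ A * ((M + C) / 2) * W x := by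
  have hA : 0 ≤ A := (abs_nonneg a).trans ha
  have hsum : |∑ i, v i * vderiv (X i) W x| ≤ (M + C) / 2 * W x := by
    have hgrad : ∑ i, vderiv (X i) W x ^ 2 ≤ C * W x := hW.hgradSq_le x
    linarith [abs_sum_mul_le_half_sum_sq Finset.univ v fun i => vderiv (X i) W x]
  rw [abs_mul, mul_assoc]
  gcongr

lemma generator_exp_le (hW : IsLyapunovWeight X C W) (hX : ∀ i, Differentiable ℝ (X i)) (σ : ℝ)
    {a A M K c : ℝ} (ha : |a| ≤ A) {x : Fin d → ℝ} {v : Fin m → ℝ}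
    (hv : ∑ i, v i ^ 2 ≤ M * W x) (hc : c ≤ K * W x) :
    σ * hLap X (fun y => Real.exp (a * W y)) x
        + (∑ i, v i * vderiv (X i) (fun y => Real.exp (a * W y)) x) + c * Real.exp (a * W x)
      ≤ lyapunovRate σ C M K A * W x * Real.exp (a * W x) := by
  have hWd : DifferentiableAt ℝ W x := hW.contDiff.differentiable two_ne_zero x
  have drift_eq : ∑ i, v i * vderiv (X i) (fun y => Real.exp (a * W y)) x
      = a * (∑ i, v i * vderiv (X i) W x) * Real.exp (a * W x) := by
    simp only [vderiv_exp_const_mul _ hWd, Finset.mul_sum, Finset.sum_mul]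
    exact Finset.sum_congr rfl fun i _ => by ring
  have diffusion_le : σ * (a ^ 2 * hgradSq X W x + a * hLap X W x)
      ≤ |σ| * ((A ^ 2 * C + A * C) * W x) := by
    refine (le_abs_self _).trans ?_
    rw [abs_mul]
    gcongr
    exact hW.abs_diffusion_le ha x
  have drift_le := (le_abs_self _).trans (hW.abs_drift_le ha hv)
  rw [hLap_exp_const_mul hX hW.contDiff, drift_eq, ← mul_assoc, ← add_mul, ← add_mul]
  gcongr
  rw [lyapunovRate]
  linarith

end IsLyapunovWeight

theorem exponential_subsolution_general {d m : ℕ} {X : Fin m → (Fin d → ℝ) → (Fin d → ℝ)}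
    (hX : ∀ i, Differentiable ℝ (X i)) {C : ℝ} {W : (Fin d → ℝ) → ℝ}
    (hW : IsLyapunovWeight X C W) {τ₀ T : ℝ} (hT : τ₀ < T)
    {B : ℝ → (Fin d → ℝ) → Fin m → ℝ} {M : ℝ}
    (hB : ∀ t ∈ Ioo τ₀ T, ∀ x, ∑ i, B t x i ^ 2 ≤ M * W x)
    {c : ℝ → (Fin d → ℝ) → ℝ} {K : ℝ} (hc : ∀ t ∈ Ioo τ₀ T, ∀ x, c t x ≤ K * W x) (σ β₁ : ℝ) :
    ∃ β : ℝ, 0 < β ∧ ∃ τ ∈ Ioc τ₀ T, ∀ t ∈ Ioo τ₀ τ, ∀ x : Fin d → ℝ,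
      deriv (fun s : ℝ => Real.exp (-(β₁ + β * (s - τ₀)) * W x)) t
        + σ * hLap X (fun y => Real.exp (-(β₁ + β * (t - τ₀)) * W y)) x
        + (∑ i, B t x i * vderiv (X i) (fun y => Real.exp (-(β₁ + β * (t - τ₀)) * W y)) x)
        + c t x * Real.exp (-(β₁ + β * (t - τ₀)) * W x) ≤ 0 := by
  set R := lyapunovRate σ C M K (|β₁| + 1)
  obtain ⟨β, hβ, hRβ⟩ : ∃ β : ℝ, 0 < β ∧ R ≤ β :=
    ⟨max 1 R, lt_max_of_lt_left one_pos, le_max_right 1 R⟩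
  have hτ : τ₀ < τ₀ + 1 / β := lt_add_of_pos_right τ₀ (one_div_pos.2 hβ)
  refine ⟨β, hβ, min T (τ₀ + 1 / β), ⟨lt_min hT hτ, min_le_left _ _⟩, fun t ht x => ?_⟩
  obtain ⟨ht₀, htT, htβ⟩ : τ₀ < t ∧ t < T ∧ t < τ₀ + 1 / β := ⟨ht.1, lt_min_iff.1 ht.2⟩
  have exponent_le : |-(β₁ + β * (t - τ₀))| ≤ |β₁| + 1 := by
    have hpos : 0 ≤ β * (t - τ₀) := mul_nonneg hβ.le (sub_nonneg.2 ht₀.le)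
    have hle : β * (t - τ₀) ≤ 1 := ((lt_div_iff₀' hβ).1 (sub_lt_iff_lt_add'.2 htβ)).le
    rw [abs_neg]
    exact (abs_add_le _ _).trans (by gcongr; rwa [abs_of_nonneg hpos])
  have generator_le := hW.generator_exp_le hX σ exponent_le (hB t ⟨ht₀, htT⟩ x) (hc t ⟨ht₀, htT⟩ x)
  have rate_le : R * W x * Real.exp (-(β₁ + β * (t - τ₀)) * W x)
      ≤ β * W x * Real.exp (-(β₁ + β * (t - τ₀)) * W x) := by
    have := hW.nonneg x
    gcongr
  rw [deriv_exp_neg_affine_mul]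
  linarith

/-- Construction of the exponential subsolution `Φ` used in the uniqueness
proof for the linear Fokker–Planck equation:  for every `β₁ > 0` there are `β̄ > 0` and
`τ ∈ (τ₀, T]` such that `Φ(t,x) = exp(−(β₁ + β̄(t−τ₀))(N(x)² + 1))` satisfies
`∂_t Φ + σ Δ_G Φ + B·∇_G Φ + (div_G B) Φ ≤ 0` on `(τ₀, τ) × ℝ^d`. -/
theorem exponential_subsolution {d m : ℕ} (hd : 0 < d) (hm : 0 < m)
    (X : Fin m → (Fin d → ℝ) → (Fin d → ℝ)) (hXsm : ∀ i, ContDiff ℝ (⊤ : ℕ∞) (X i))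
    (σ T τ₀ : ℝ) (hσ : 0 < σ) (hT : 0 < T) (hτ₀ : τ₀ ∈ Set.Ico 0 T)
    (B : ℝ → (Fin d → ℝ) → Fin m → ℝ)
    (MB : ℝ) (hBbd : ∀ t x i, |B t x i| ≤ MB)
    (hBdiff : ∀ t x i, DifferentiableAt ℝ (fun y => B t y i) x)
    (MdivB : ℝ) (hdivBbd : ∀ t x, |hdiv X (B t) x| ≤ MdivB)
    (N : (Fin d → ℝ) → ℝ) (hN : ∀ x, 0 ≤ N x)
    (hNC2 : ContDiff ℝ 2 (fun x => N x ^ 2))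
    (C : ℝ) (hC : 0 ≤ C)
    (hgrad : ∀ x, hgradSq X (fun y => N y ^ 2) x ≤ C * N x ^ 2)
    (hlap : ∀ x, |hLap X (fun y => N y ^ 2) x| ≤ C) :
    ∀ β₁ : ℝ, 0 < β₁ → ∃ β' : ℝ, 0 < β' ∧ ∃ τ ∈ Set.Ioc τ₀ T,
      ∀ t ∈ Set.Ioo τ₀ τ, ∀ x : Fin d → ℝ,
        deriv (fun s : ℝ => Real.exp (-(β₁ + β' * (s - τ₀)) * (N x ^ 2 + 1))) t
          + σ * hLap X (fun y => Real.exp (-(β₁ + β' * (t - τ₀)) * (N y ^ 2 + 1))) x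
          + (∑ i, B t x i *
              vderiv (X i) (fun y => Real.exp (-(β₁ + β' * (t - τ₀)) * (N y ^ 2 + 1))) x)
          + hdiv X (B t) x * Real.exp (-(β₁ + β' * (t - τ₀)) * (N x ^ 2 + 1)) ≤ 0 := by
  have one_le (x : Fin d → ℝ) : 1 ≤ N x ^ 2 + 1 := le_add_of_nonneg_left (sq_nonneg (N x))
  have hB (t x) : ∑ i, B t x i ^ 2 ≤ Fintype.card (Fin m) * MB ^ 2 * (N x ^ 2 + 1) :=
    (sum_sq_le_of_abs_le (hBbd t x)).trans (le_mul_of_one_le_right (by positivity) (one_le x))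
  have hdiv_le (t x) : hdiv X (B t) x ≤ MdivB * (N x ^ 2 + 1) :=
    (le_abs_self _).trans <| (hdivBbd t x).trans <|
      le_mul_of_one_le_right ((abs_nonneg _).trans (hdivBbd t x)) (one_le x)
  exact fun β₁ _ => exponential_subsolution_general (fun i => (hXsm i).differentiable (by simp))
    (.add_one_of_hLap_bounded hNC2 (fun x => sq_nonneg (N x)) hgrad hlap) hτ₀.2
    (fun t _ => hB t) (fun t _ => hdiv_le t) σ β₁
end
end

section
/- Let σ > 0 and let U ⊆ ℝ × ℝ^d be open. Let B : U → ℝ^m and Q : U → ℝ with Q ≥ 0 on U, and let ρ : U → ℝ be C¹ in t and C² in x with continuous derivatives, satisfying ∂_t ρ − σ Δ_G ρ + B·∇_G ρ + Q ρ = 0 pointwise on U. Then for every ε > 0 the function w := √(ρ² + ε) satisfies the differential inequality ∂_t w − σ Δ_G w + B·∇_G w ≤ 0 pointwise on U. -/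
/-!
Write `L = ∂_t − σ Δ_G + B·∇_G`. Since the `X_i` are derivations, `L (F ∘ ρ)` equals
`F'(ρ) L ρ − σ F''(ρ) |∇_G ρ|²`. For `F r = √(r² + ε)` one has `F' r = r / F r` and
`F'' r = ε / (F r)³ > 0`, so `L w ≤ ρ L ρ / w`, and the equation `L ρ = −Q ρ` makes
`ρ L ρ = −Q ρ²` nonpositive.
-/

open MeasureTheory Set

noncomputable section

lemma hasDerivAt_sqrt_sq_add {ε : ℝ} (hε : 0 < ε) (r : ℝ) :
    HasDerivAt (fun r : ℝ => √(r ^ 2 + ε)) (r / √(r ^ 2 + ε)) r := by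
  have hpos : 0 < r ^ 2 + ε := by positivity
  have hsq : HasDerivAt (fun r : ℝ => r ^ 2 + ε) (2 * r) r := by
    simpa using (hasDerivAt_pow 2 r).add_const ε
  simpa only [mul_div_mul_left r _ (two_ne_zero' ℝ)] using hsq.sqrt hpos.ne'

lemma hasDerivAt_div_sqrt_sq_add {ε : ℝ} (hε : 0 < ε) (r : ℝ) :
    HasDerivAt (fun r : ℝ => r / √(r ^ 2 + ε)) (ε / √(r ^ 2 + ε) ^ 3) r := by
  have hpos : 0 < r ^ 2 + ε := by positivity
  have hsqrt_ne : √(r ^ 2 + ε) ≠ 0 := (Real.sqrt_pos.mpr hpos).ne'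
  have hsq_sqrt : √(r ^ 2 + ε) ^ 2 = r ^ 2 + ε := Real.sq_sqrt hpos.le
  refine ((hasDerivAt_id' r).div (hasDerivAt_sqrt_sq_add hε r) hsqrt_ne).congr_deriv ?_
  field_simp
  rw [hsq_sqrt]
  ring

section DerivativeAlongField

variable {E : Type*} [NormedAddCommGroup E] [NormedSpace ℝ E] {f : E → ℝ} {X : E → E} {x : E}

lemma fderiv_scalar_comp_apply {F : ℝ → ℝ} {F' : ℝ} (hF : HasDerivAt F F' (f x))
    (hf : DifferentiableAt ℝ f x) (v : E) :
    fderiv ℝ (fun y => F (f y)) x v = F' * fderiv ℝ f x v := by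
  have hcomp : HasFDerivAt (fun y => F (f y)) (F' • fderiv ℝ f x) x :=
    hF.comp_hasFDerivAt x hf.hasFDerivAt
  rw [hcomp.fderiv, smul_apply, smul_eq_mul]

lemma fderiv_fderiv_scalar_comp_apply {F F' : ℝ → ℝ} {F'' : ℝ}
    (hF : ∀ᶠ r in nhds (f x), HasDerivAt F (F' r) r) (hF' : HasDerivAt F' F'' (f x))
    (hf : ∀ᶠ y in nhds x, DifferentiableAt ℝ f y)
    (hXf : DifferentiableAt ℝ (fun y => fderiv ℝ f y (X y)) x) :
    fderiv ℝ (fun y => fderiv ℝ (fun z => F (f z)) y (X y)) x (X x) =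
      F' (f x) * fderiv ℝ (fun y => fderiv ℝ f y (X y)) x (X x) +
        F'' * fderiv ℝ f x (X x) ^ 2 := by
  have hfx : DifferentiableAt ℝ f x := hf.self_of_nhds
  have hfirst : (fun y => fderiv ℝ (fun z => F (f z)) y (X y)) =ᶠ[nhds x]
      fun y => F' (f y) * fderiv ℝ f y (X y) := by
    filter_upwards [hf, hfx.continuousAt.eventually hF] with y hfy hFy
    exact fderiv_scalar_comp_apply hFy hfy (X y)
  have hF'f : DifferentiableAt ℝ (fun y => F' (f y)) x :=
    (hF'.comp_hasFDerivAt x hfx.hasFDerivAt).differentiableAt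
  rw [hfirst.fderiv_eq, fderiv_fun_mul hF'f hXf]
  simp only [add_apply, smul_apply, smul_eq_mul, fderiv_scalar_comp_apply hF' hfx]
  ring

lemma differentiableAt_fderiv_apply_of_contDiffAt (hf : ContDiffAt ℝ 2 f x)
    (hX : DifferentiableAt ℝ X x) : DifferentiableAt ℝ (fun y => fderiv ℝ f y (X y)) x :=
  ((hf.fderiv_right (m := 1) (by norm_num)).differentiableAt one_ne_zero).clm_apply hX

end DerivativeAlongField

section ParabolicOperator

variable {E ι : Type*} [NormedAddCommGroup E] [NormedSpace ℝ E] [Fintype ι]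

/-- The parabolic operator `L = ∂_t − σ Δ_G + B·∇_G` of a finite family `X` of vector fields on a
normed space; `u` is a subsolution where `L u ≤ 0`. The derivative of `f` along `X i` is
written out as `fderiv ℝ f x (X i x)`; for `E = Fin d → ℝ` this is `vderiv (X i) f x` by
definition. -/
def horizontalParabolicOp (X : ι → E → E) (σ : ℝ) (B : ℝ → E → ι → ℝ) (u : ℝ → E → ℝ)
    (t : ℝ) (x : E) : ℝ :=
  deriv (fun s => u s x) t
    - σ * ∑ i, fderiv ℝ (fun y => fderiv ℝ (u t) y (X i y)) x (X i x)
    + ∑ i, B t x i * fderiv ℝ (u t) x (X i x)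

variable {X : ι → E → E} {σ : ℝ} {B : ℝ → E → ι → ℝ} {u : ℝ → E → ℝ} {t : ℝ} {x : E}

lemma horizontalParabolicOp_scalar_comp {F F' : ℝ → ℝ} {F'' : ℝ}
    (hF : ∀ᶠ r in nhds (u t x), HasDerivAt F (F' r) r) (hF' : HasDerivAt F' F'' (u t x))
    (hut : DifferentiableAt ℝ (fun s => u s x) t)
    (hux : ∀ᶠ y in nhds x, DifferentiableAt ℝ (u t) y)
    (hXu : ∀ i, DifferentiableAt ℝ (fun y => fderiv ℝ (u t) y (X i y)) x) :
    horizontalParabolicOp X σ B (fun s y => F (u s y)) t x =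
      F' (u t x) * horizontalParabolicOp X σ B u t x
        - σ * (F'' * ∑ i, fderiv ℝ (u t) x (X i x) ^ 2) := by
  have htime : deriv (fun s => F (u s x)) t = F' (u t x) * deriv (fun s => u s x) t :=
    (HasDerivAt.comp t hF.self_of_nhds hut.hasDerivAt).deriv
  have hdrift : ∀ i, B t x i * fderiv ℝ (fun y => F (u t y)) x (X i x) =
      F' (u t x) * (B t x i * fderiv ℝ (u t) x (X i x)) := fun i => by
    rw [fderiv_scalar_comp_apply hF.self_of_nhds hux.self_of_nhds, mul_left_comm]
  simp only [horizontalParabolicOp, htime, hdrift,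
    fun i => fderiv_fderiv_scalar_comp_apply hF hF' hux (hXu i),
    Finset.sum_add_distrib, ← Finset.mul_sum]
  ring

lemma mul_horizontalParabolicOp_nonpos {q : ℝ} (hq : 0 ≤ q)
    (hu : horizontalParabolicOp X σ B u t x + q * u t x = 0) :
    u t x * horizontalParabolicOp X σ B u t x ≤ 0 := calc
  u t x * horizontalParabolicOp X σ B u t x = -(q * u t x ^ 2) := by
    rw [eq_neg_of_add_eq_zero_left hu]
    ring
  _ ≤ 0 := neg_nonpos.mpr (mul_nonneg hq (sq_nonneg _))

theorem sqrt_regularization_subsolution_general {ε : ℝ} (hσ : 0 ≤ σ) (hε : 0 < ε)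
    (hut : DifferentiableAt ℝ (fun s => u s x) t)
    (hux : ∀ᶠ y in nhds x, DifferentiableAt ℝ (u t) y)
    (hXu : ∀ i, DifferentiableAt ℝ (fun y => fderiv ℝ (u t) y (X i y)) x)
    (hLu : u t x * horizontalParabolicOp X σ B u t x ≤ 0) :
    horizontalParabolicOp X σ B (fun s y => √(u s y ^ 2 + ε)) t x ≤ 0 := by
  have hfirst : u t x / √(u t x ^ 2 + ε) * horizontalParabolicOp X σ B u t x ≤ 0 := by
    rw [div_mul_eq_mul_div]
    exact div_nonpos_of_nonpos_of_nonneg hLu (Real.sqrt_nonneg _)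
  have hsecond :
      0 ≤ σ * (ε / √(u t x ^ 2 + ε) ^ 3 * ∑ i, fderiv ℝ (u t) x (X i x) ^ 2) := by
    positivity
  rw [horizontalParabolicOp_scalar_comp (.of_forall (hasDerivAt_sqrt_sq_add hε))
    (hasDerivAt_div_sqrt_sq_add hε _) hut hux hXu]
  exact sub_nonpos_of_le (hfirst.trans hsecond)

end ParabolicOperator

/-- If `ρ` solves `∂_t ρ − σ Δ_G ρ + B·∇_G ρ + Q ρ = 0` on an open set `U`
with `Q ≥ 0`, then for every `ε > 0` the function `w = √(ρ² + ε)` satisfies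
`∂_t w − σ Δ_G w + B·∇_G w ≤ 0` on `U`. -/
theorem sqrt_regularization_subsolution {d m : ℕ} (hd : 0 < d) (hm : 0 < m)
    (X : Fin m → (Fin d → ℝ) → (Fin d → ℝ)) (hXsm : ∀ i, ContDiff ℝ (⊤ : ℕ∞) (X i))
    (σ : ℝ) (hσ : 0 < σ)
    (U : Set (ℝ × (Fin d → ℝ))) (hU : IsOpen U)
    (B : ℝ → (Fin d → ℝ) → Fin m → ℝ) (Q : ℝ → (Fin d → ℝ) → ℝ)
    (hQ : ∀ p ∈ U, 0 ≤ Q p.1 p.2)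
    (ρ : ℝ → (Fin d → ℝ) → ℝ)
    (hρt : ∀ p : ℝ × (Fin d → ℝ), p ∈ U → DifferentiableAt ℝ (fun s => ρ s p.2) p.1)
    (hρx : ∀ p : ℝ × (Fin d → ℝ), p ∈ U → ContDiffAt ℝ 2 (ρ p.1) p.2)
    (hρtcont : ContinuousOn (fun p : ℝ × (Fin d → ℝ) => deriv (fun s => ρ s p.2) p.1) U)
    (hρxcont : ∀ i, ContinuousOn (fun p : ℝ × (Fin d → ℝ) => vderiv (X i) (ρ p.1) p.2) U)
    (hρxxcont : ∀ i i', ContinuousOn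
        (fun p : ℝ × (Fin d → ℝ) => vderiv (X i) (vderiv (X i') (ρ p.1)) p.2) U)
    (hPDE : ∀ p : ℝ × (Fin d → ℝ), p ∈ U →
        deriv (fun s => ρ s p.2) p.1 - σ * hLap X (ρ p.1) p.2
          + (∑ i, B p.1 p.2 i * vderiv (X i) (ρ p.1) p.2) + Q p.1 p.2 * ρ p.1 p.2 = 0)
    (ε : ℝ) (hε : 0 < ε) :
    ∀ p : ℝ × (Fin d → ℝ), p ∈ U →
      deriv (fun s => Real.sqrt (ρ s p.2 ^ 2 + ε)) p.1
        - σ * hLap X (fun y => Real.sqrt (ρ p.1 y ^ 2 + ε)) p.2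
        + (∑ i, B p.1 p.2 i * vderiv (X i) (fun y => Real.sqrt (ρ p.1 y ^ 2 + ε)) p.2) ≤ 0 :=
  fun p hp => sqrt_regularization_subsolution_general hσ.le hε (hρt p hp)
    (((hρx p hp).eventually (by simp)).mono fun _ hy => hy.differentiableAt two_ne_zero)
    (fun i => differentiableAt_fderiv_apply_of_contDiffAt (hρx p hp)
      ((hXsm i).differentiable (by simp) p.2))
    (mul_horizontalParabolicOp_nonpos (hQ p hp) (hPDE p hp))
end
end

section
/- Let σ > 0 and T > 0. Assume each X_i is divergence-free and δ-homogeneous of degree one. Let b : [0,T]×ℝ^d → ℝ^m be bounded and continuous, with b(t,·) ∈ C¹(ℝ^d, ℝ^m) for each t. Let ρ : [0,T]×ℝ^d → ℝ be continuous and bounded, C¹ in t and C² in x on (0,T)×ℝ^d with these derivatives continuous, satisfying the Fokker–Planck equation ∂_t ρ = σ Δ_G ρ + div_G(b(t,·) ρ(t,·)) pointwise on (0,T)×ℝ^d, and such that sup over t ∈ [0,T] of ∫_{ℝ^d} |ρ(t,x)| dx is finite. Then mass is conserved: ∫_{ℝ^d} ρ(t,x) dx = ∫_{ℝ^d} ρ(0,x)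 dx for every t ∈ [0,T]. -/
open MeasureTheory Set

noncomputable section

/-!
Test the equation against the dilated cutoff `χ ∘ δ_l`, where `χ` is a bump function equal to `1`
near the origin. As the `X i` are divergence-free, integration by parts moves all derivatives onto
the cutoff, so `d/dt ∫ ρ (χ ∘ δ_l)` is the integral of `ρ` against `(σ Δ_G - b · ∇_G) (χ ∘ δ_l)`.
By homogeneity each horizontal derivative of `χ ∘ δ_l` brings out a factor `l`, so this function is
`O(l)` uniformly, and the localised mass varies by `O(l)` on `[0, T]`. As `l → 0` the localised
mass tends to the mass.
-/

section ParametricIntegral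

variable {Y E : Type*} [TopologicalSpace Y] [R1Space Y] [MeasurableSpace Y]
  [OpensMeasurableSpace Y] {μ : Measure Y} [IsFiniteMeasureOnCompacts μ]
  [NormedAddCommGroup E] [NormedSpace ℝ E]

lemma hasDerivAt_integral_of_compact_support {F F' : ℝ → Y → E} {U : Set ℝ} {k : Set Y} {t : ℝ}
    (hU : IsOpen U) (ht : t ∈ U) (hk : IsCompact k) (hF : ∀ s ∈ U, Continuous (F s))
    (hF' : ContinuousOn F'.uncurry (U ×ˢ univ))
    (hFF' : ∀ s ∈ U, ∀ y, HasDerivAt (F · y) (F' s y) s)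
    (hFk : ∀ s ∈ U, ∀ y, y ∉ k → F s y = 0) :
    HasDerivAt (fun s ↦ ∫ y, F s y ∂μ) (∫ y, F' t y ∂μ) t := by
  have hF'k : ∀ s ∈ U, ∀ y, y ∉ k → F' s y = 0 := fun s hs y hy ↦ by
    have hloc : (F · y) =ᶠ[nhds s] fun _ ↦ 0 := by
      filter_upwards [hU.mem_nhds hs] with r hr using hFk r hr y hy
    exact (hFF' s hs y).unique ((hasDerivAt_const s 0).congr_of_eventuallyEq hloc)
  have hFint : ∀ s ∈ U, Integrable (F s) μ := fun s hs ↦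
    (hF s hs).integrable_of_hasCompactSupport (.intro hk (hFk s hs))
  have hF't : Continuous (F' t) :=
    hF'.comp_continuous (.prodMk_right t) fun y ↦ ⟨ht, mem_univ y⟩
  obtain ⟨J, hJ, htJ, hJU⟩ := exists_compact_subset hU ht
  obtain ⟨C, hC⟩ := (hJ.prod hk.closure).exists_bound_of_continuousOn
    (hF'.mono (prod_mono hJU (subset_univ (closure k))))
  refine (hasDerivAt_integral_of_dominated_loc_of_deriv_le
    (bound := (closure k).indicator fun _ ↦ C) (mem_interior_iff_mem_nhds.1 htJ) ?_ (hFint t ht)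
    (hF't.integrable_of_hasCompactSupport (.intro hk (hF'k t ht))).aestronglyMeasurable ?_ ?_ ?_).2
  · filter_upwards [hU.mem_nhds ht] with s hs using (hFint s hs).aestronglyMeasurable
  · refine .of_forall fun y s hs ↦ ?_
    by_cases hy : y ∈ closure k
    · simpa [hy] using hC (s, y) ⟨hs, hy⟩
    · simp [hy, hF'k s (hJU hs) y fun hyk ↦ hy (subset_closure hyk)]
  · exact (integrableOn_const hk.closure.measure_ne_top).integrable_indicator
      isClosed_closure.measurableSet
  · exact .of_forall fun y s hs ↦ hFF' s (hJU hs) y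

end ParametricIntegral

section VectorField

variable {d : ℕ} {X : (Fin d → ℝ) → (Fin d → ℝ)} {f g : (Fin d → ℝ) → ℝ}

lemma contDiff_vderiv {n k : WithTop ℕ∞} (hX : ContDiff ℝ n X) (hf : ContDiff ℝ k f)
    (hnk : n + 1 ≤ k) : ContDiff ℝ n (vderiv X f) :=
  (hf.fderiv_right hnk).clm_apply hX

lemma continuous_vderiv (hX : Continuous X) (hf : ContDiff ℝ 1 f) : Continuous (vderiv X f) :=
  (hf.continuous_fderiv one_ne_zero).clm_apply hX

lemma support_vderiv_subset (X : (Fin d → ℝ) → (Fin d → ℝ)) (f : (Fin d → ℝ) → ℝ) :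
    Function.support (vderiv X f) ⊆ tsupport f := fun x hx ↦
  support_fderiv_subset ℝ fun hfx ↦ hx (by rw [vderiv, hfx, zero_apply])

lemma hasCompactSupport_vderiv (X : (Fin d → ℝ) → (Fin d → ℝ)) (hf : HasCompactSupport f) :
    HasCompactSupport (vderiv X f) :=
  hf.mono' (support_vderiv_subset X f)

lemma vderiv_fun_mul {x : Fin d → ℝ} (hf : DifferentiableAt ℝ f x)
    (hg : DifferentiableAt ℝ g x) :
    vderiv X (fun y ↦ f y * g y) x = vderiv X f x * g x + f x * vderiv X g x := by
  simp only [vderiv, fderiv_fun_mul hf hg, add_apply, smul_apply,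
    smul_eq_mul]
  ring

lemma vderiv_const_mul (X : (Fin d → ℝ) → (Fin d → ℝ)) (c : ℝ) (f : (Fin d → ℝ) → ℝ) :
    vderiv X (fun x ↦ c * f x) = fun x ↦ c * vderiv X f x := by
  funext x
  have hfderiv : fderiv ℝ (fun y ↦ c * f y) x = c • fderiv ℝ f x :=
    congrFun (fderiv_const_smul_field c) x
  rw [vderiv, hfderiv, smul_apply, smul_eq_mul, vderiv]

lemma vderiv_eq_sum (X : (Fin d → ℝ) → (Fin d → ℝ)) (f : (Fin d → ℝ) → ℝ) (x : Fin d → ℝ) :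
    vderiv X f x = ∑ j, X x j * fderiv ℝ f x (Pi.single j 1) := by
  conv_lhs => rw [vderiv, pi_eq_sum_univ' (X x)]
  simp only [map_sum, map_smul, smul_eq_mul]

lemma ediv_eq_sum {x : Fin d → ℝ} (hX : DifferentiableAt ℝ X x) :
    ediv X x = ∑ j, fderiv ℝ (fun y ↦ X y j) x (Pi.single j 1) := by
  simp only [ediv, fderiv_apply hX, ContinuousLinearMap.comp_apply, ContinuousLinearMap.proj_apply]

lemma integral_vderiv_eq_neg_integral_ediv_mul (hX : ContDiff ℝ 1 X) (hf : ContDiff ℝ 1 f)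
    (hfc : HasCompactSupport f) : ∫ x, vderiv X f x = -∫ x, ediv X x * f x := by
  have hXj (j : Fin d) : ContDiff ℝ 1 (fun x ↦ X x j) := contDiff_pi.1 hX j
  have hint_mul (j : Fin d) : Integrable (fun x ↦ X x j * f x) :=
    ((hXj j).continuous.mul hf.continuous).integrable_of_hasCompactSupport hfc.mul_left
  have hint_mul_fderiv (j : Fin d) :
      Integrable (fun x ↦ X x j * fderiv ℝ f x (Pi.single j 1)) :=
    ((hXj j).continuous.mul ((hf.continuous_fderiv one_ne_zero).clm_apply
      continuous_const)).integrable_of_hasCompactSupport (hfc.fderiv_apply (𝕜 := ℝ) _).mul_left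
  have hint_fderiv_mul (j : Fin d) :
      Integrable (fun x ↦ fderiv ℝ (fun y ↦ X y j) x (Pi.single j 1) * f x) :=
    ((((hXj j).continuous_fderiv one_ne_zero).clm_apply continuous_const).mul
      hf.continuous).integrable_of_hasCompactSupport hfc.mul_left
  calc ∫ x, vderiv X f x
    _ = ∑ j, ∫ x, X x j * fderiv ℝ f x (Pi.single j 1) := by
      simp_rw [vderiv_eq_sum]
      exact integral_finsetSum _ fun j _ ↦ hint_mul_fderiv j
    _ = ∑ j, -∫ x, fderiv ℝ (fun y ↦ X y j) x (Pi.single j 1) * f x :=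
      Finset.sum_congr rfl fun j _ ↦ integral_mul_fderiv_eq_neg_fderiv_mul_of_integrable
        (hint_fderiv_mul j) (hint_mul_fderiv j) (hint_mul j)
        (fun x _ ↦ (hXj j).differentiable one_ne_zero x)
        (fun x _ ↦ hf.differentiable one_ne_zero x)
    _ = -∫ x, ediv X x * f x := by
      rw [Finset.sum_neg_distrib, ← integral_finsetSum _ fun j _ ↦ hint_fderiv_mul j]
      simp_rw [ediv_eq_sum (hX.differentiable one_ne_zero _), Finset.sum_mul]

lemma integrable_vderiv_mul (hX : Continuous X) (hf : ContDiff ℝ 1 f) (hg : Continuous g)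
    (hgc : HasCompactSupport g) : Integrable (fun x ↦ vderiv X f x * g x) :=
  ((continuous_vderiv hX hf).mul hg).integrable_of_hasCompactSupport hgc.mul_left

lemma integrable_mul_vderiv (hX : Continuous X) (hf : Continuous f) (hg : ContDiff ℝ 1 g)
    (hgc : HasCompactSupport g) : Integrable (fun x ↦ f x * vderiv X g x) :=
  (hf.mul (continuous_vderiv hX hg)).integrable_of_hasCompactSupport
    (hasCompactSupport_vderiv X hgc).mul_left

lemma integral_vderiv_mul (hX : ContDiff ℝ 1 X) (hXdiv : ∀ x, ediv X x = 0)
    (hf : ContDiff ℝ 1 f) (hg : ContDiff ℝ 1 g) (hgc : HasCompactSupport g) :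
    ∫ x, vderiv X f x * g x = -∫ x, f x * vderiv X g x := by
  have hzero : ∫ x, vderiv X (fun y ↦ f y * g y) x = 0 := by
    simp [integral_vderiv_eq_neg_integral_ediv_mul hX (hf.mul hg) hgc.mul_left, hXdiv]
  simp_rw [vderiv_fun_mul (hf.differentiable one_ne_zero _) (hg.differentiable one_ne_zero _)]
    at hzero
  rw [integral_add (integrable_vderiv_mul hX.continuous hf hg.continuous hgc)
    (integrable_mul_vderiv hX.continuous hf.continuous hg hgc)] at hzero
  exact eq_neg_of_add_eq_zero_left hzero

end VectorField

section HorizontalOperators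

variable {d m : ℕ} {X : Fin m → (Fin d → ℝ) → (Fin d → ℝ)} {f g : (Fin d → ℝ) → ℝ}
  {B : (Fin d → ℝ) → Fin m → ℝ}

lemma continuous_hdiv (hX : ∀ i, Continuous (X i)) (hB : ∀ i, ContDiff ℝ 1 (fun y ↦ B y i)) :
    Continuous (hdiv X B) :=
  continuous_finsetSum _ fun i _ ↦ continuous_vderiv (hX i) (hB i)

lemma continuous_hLap (hX : ∀ i, ContDiff ℝ 1 (X i)) (hf : ContDiff ℝ 2 f) :
    Continuous (hLap X f) :=
  continuous_hdiv (fun i ↦ (hX i).continuous)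
    fun i ↦ contDiff_vderiv (hX i) hf one_add_one_eq_two.le

lemma hasCompactSupport_hLap (X : Fin m → (Fin d → ℝ) → (Fin d → ℝ))
    (hf : HasCompactSupport f) : HasCompactSupport (hLap X f) :=
  hf.mono' fun x hx ↦ by
    obtain ⟨i, -, hi⟩ := Finset.exists_ne_zero_of_sum_ne_zero hx
    exact closure_minimal (support_vderiv_subset (X i) f) (isClosed_tsupport f)
      (support_vderiv_subset (X i) _ hi)

lemma integral_hdiv_mul (hX : ∀ i, ContDiff ℝ 1 (X i)) (hXdiv : ∀ i x, ediv (X i) x = 0)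
    (hB : ∀ i, ContDiff ℝ 1 (fun y ↦ B y i)) (hg : ContDiff ℝ 1 g) (hgc : HasCompactSupport g) :
    ∫ x, hdiv X B x * g x = -∫ x, ∑ i, B x i * vderiv (X i) g x := by
  simp_rw [hdiv, Finset.sum_mul]
  rw [integral_finsetSum _ fun i _ ↦
      integrable_vderiv_mul (hX i).continuous (hB i) hg.continuous hgc,
    integral_finsetSum _ fun i _ ↦
      integrable_mul_vderiv (hX i).continuous (hB i).continuous hg hgc,
    ← Finset.sum_neg_distrib]
  exact Finset.sum_congr rfl fun i _ ↦ integral_vderiv_mul (hX i) (hXdiv i) (hB i) hg hgc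

lemma integral_hLap_mul (hX : ∀ i, ContDiff ℝ 1 (X i)) (hXdiv : ∀ i x, ediv (X i) x = 0)
    (hf : ContDiff ℝ 2 f) (hg : ContDiff ℝ 2 g) (hgc : HasCompactSupport g) :
    ∫ x, hLap X f x * g x = ∫ x, f x * hLap X g x := by
  have hf1 : ContDiff ℝ 1 f := hf.of_le one_le_two
  have hXf (i : Fin m) : ContDiff ℝ 1 (vderiv (X i) f) :=
    contDiff_vderiv (hX i) hf one_add_one_eq_two.le
  have hXg (i : Fin m) : ContDiff ℝ 1 (vderiv (X i) g) :=
    contDiff_vderiv (hX i) hg one_add_one_eq_two.le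
  have hXgc (i : Fin m) : HasCompactSupport (vderiv (X i) g) := hasCompactSupport_vderiv (X i) hgc
  calc ∫ x, hLap X f x * g x
    _ = -∫ x, ∑ i, vderiv (X i) f x * vderiv (X i) g x :=
      integral_hdiv_mul hX hXdiv hXf (hg.of_le one_le_two) hgc
    _ = ∑ i, -∫ x, vderiv (X i) f x * vderiv (X i) g x := by
      rw [integral_finsetSum _ fun i _ ↦
        integrable_vderiv_mul (hX i).continuous hf1 (hXg i).continuous (hXgc i),
        Finset.sum_neg_distrib]
    _ = ∑ i, ∫ x, f x * vderiv (X i) (vderiv (X i) g) x :=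
      Finset.sum_congr rfl fun i _ ↦ by
        rw [integral_vderiv_mul (hX i) (hXdiv i) hf1 (hXg i) (hXgc i), neg_neg]
    _ = ∫ x, f x * hLap X g x := by
      simp_rw [hLap, Finset.mul_sum]
      exact (integral_finsetSum _ fun i _ ↦
        integrable_mul_vderiv (hX i).continuous hf.continuous (hXg i) (hXgc i)).symm

/-- The operator `g ↦ σ Δ_G g - B · ∇_G g`, which for divergence-free fields `X i` is the formal
adjoint of the spatial Fokker–Planck operator `f ↦ σ Δ_G f + div_G (B f)`. -/
def fokkerPlanckAdjoint (X : Fin m → (Fin d → ℝ) → (Fin d → ℝ)) (σ : ℝ)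
    (B : (Fin d → ℝ) → Fin m → ℝ) (g : (Fin d → ℝ) → ℝ) (x : Fin d → ℝ) : ℝ :=
  σ * hLap X g x - ∑ i, B x i * vderiv (X i) g x

lemma integral_fokkerPlanck_mul (hX : ∀ i, ContDiff ℝ 1 (X i))
    (hXdiv : ∀ i x, ediv (X i) x = 0) (σ : ℝ) (hB : ∀ i, ContDiff ℝ 1 (fun y ↦ B y i))
    (hf : ContDiff ℝ 2 f) (hg : ContDiff ℝ 2 g) (hgc : HasCompactSupport g) :
    ∫ x, (σ * hLap X f x + hdiv X (fun y i ↦ B y i * f y) x) * g x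
      = ∫ x, f x * fokkerPlanckAdjoint X σ B g x := by
  have hXc (i : Fin m) : Continuous (X i) := (hX i).continuous
  have hg1 : ContDiff ℝ 1 g := hg.of_le one_le_two
  have hBf (i : Fin m) : ContDiff ℝ 1 (fun y ↦ B y i * f y) := (hB i).mul (hf.of_le one_le_two)
  have hint_hLap_mul : Integrable (fun x ↦ hLap X f x * g x) :=
    ((continuous_hLap hX hf).mul hg.continuous).integrable_of_hasCompactSupport hgc.mul_left
  have hint_hdiv_mul : Integrable (fun x ↦ hdiv X (fun y i ↦ B y i * f y) x * g x) :=
    ((continuous_hdiv hXc hBf).mul hg.continuous).integrable_of_hasCompactSupport hgc.mul_left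
  have hint_mul_hLap : Integrable (fun x ↦ f x * hLap X g x) :=
    (hf.continuous.mul (continuous_hLap hX hg)).integrable_of_hasCompactSupport
      (hasCompactSupport_hLap X hgc).mul_left
  have hint_drift : Integrable (fun x ↦ ∑ i, B x i * f x * vderiv (X i) g x) :=
    integrable_finsetSum _ fun i _ ↦ integrable_mul_vderiv (hXc i) (hBf i).continuous hg1 hgc
  calc ∫ x, (σ * hLap X f x + hdiv X (fun y i ↦ B y i * f y) x) * g x
    _ = (σ * ∫ x, hLap X f x * g x) + ∫ x, hdiv X (fun y i ↦ B y i * f y) x * g x := by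
      simp_rw [add_mul, mul_assoc]
      rw [integral_add (hint_hLap_mul.const_mul σ) hint_hdiv_mul, integral_const_mul]
    _ = (σ * ∫ x, f x * hLap X g x) - ∫ x, ∑ i, B x i * f x * vderiv (X i) g x := by
      rw [integral_hLap_mul hX hXdiv hf hg hgc, integral_hdiv_mul hX hXdiv hBf hg1 hgc,
        ← sub_eq_add_neg]
    _ = ∫ x, f x * fokkerPlanckAdjoint X σ B g x := by
      rw [← integral_const_mul, ← integral_sub (hint_mul_hLap.const_mul σ) hint_drift]
      refine integral_congr_ae (.of_forall fun x ↦ ?_)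
      simp only [fokkerPlanckAdjoint, mul_sub, Finset.mul_sum, mul_left_comm (f x), mul_assoc]

end HorizontalOperators

section Dilations

variable {d m : ℕ} {w : Fin d → ℕ} {l : ℝ} {f g : (Fin d → ℝ) → ℝ}

lemma contDiff_dil (w : Fin d → ℕ) (l : ℝ) {n : WithTop ℕ∞} : ContDiff ℝ n (dil w l) := by
  unfold dil
  fun_prop

lemma continuous_dil_left (w : Fin d → ℕ) (x : Fin d → ℝ) : Continuous (fun l ↦ dil w l x) := by
  unfold dil
  fun_prop

lemma dil_zero (hw : ∀ i, 0 < w i) (x : Fin d → ℝ) : dil w 0 x = 0 := by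
  funext i
  simp [dil, (hw i).ne']

lemma hasCompactSupport_comp_dil (w : Fin d → ℕ) (hl : l ≠ 0) (hf : HasCompactSupport f) :
    HasCompactSupport (fun x ↦ f (dil w l x)) :=
  hf.comp_homeomorph (.piCongrRight fun i ↦ .mulLeft₀ (l ^ w i) (pow_ne_zero _ hl))

lemma vderiv_comp_dil {X : (Fin d → ℝ) → (Fin d → ℝ)} (hX : homogOne w X) (hl : 0 < l)
    (hf : Differentiable ℝ f) :
    vderiv X (fun x ↦ f (dil w l x)) = fun x ↦ l * vderiv X f (dil w l x) := by
  funext x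
  have hdil : DifferentiableAt ℝ (dil w l) x := (contDiff_dil w l).differentiable one_ne_zero x
  rw [vderiv, fderiv_fun_comp x (hf _) hdil, ContinuousLinearMap.comp_apply, hX l hl x, map_smul,
    smul_eq_mul, vderiv]

lemma hLap_comp_dil {X : Fin m → (Fin d → ℝ) → (Fin d → ℝ)} (hX : ∀ i, ContDiff ℝ 1 (X i))
    (hXhom : ∀ i, homogOne w (X i)) (hl : 0 < l) (hf : ContDiff ℝ 2 f) (x : Fin d → ℝ) :
    hLap X (fun y ↦ f (dil w l y)) x = l ^ 2 * hLap X f (dil w l x) := by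
  simp_rw [hLap, Finset.mul_sum]
  refine Finset.sum_congr rfl fun i _ ↦ ?_
  have hXf : ContDiff ℝ 1 (vderiv (X i) f) := contDiff_vderiv (hX i) hf one_add_one_eq_two.le
  rw [vderiv_comp_dil (hXhom i) hl (hf.differentiable two_ne_zero), vderiv_const_mul,
    vderiv_comp_dil (hXhom i) hl (hXf.differentiable one_ne_zero), sq, mul_assoc]

lemma exists_abs_fokkerPlanckAdjoint_comp_dil_le {X : Fin m → (Fin d → ℝ) → (Fin d → ℝ)}
    (hX : ∀ i, ContDiff ℝ 1 (X i)) (hXhom : ∀ i, homogOne w (X i)) (hg : ContDiff ℝ 2 g)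
    (hgc : HasCompactSupport g) (σ M : ℝ) :
    ∃ C, ∀ l ∈ Ioc (0 : ℝ) 1, ∀ (B : (Fin d → ℝ) → Fin m → ℝ) (x : Fin d → ℝ),
      (∀ i, |B x i| ≤ M) → |fokkerPlanckAdjoint X σ B (fun y ↦ g (dil w l y)) x| ≤ C * l := by
  obtain ⟨K, hK⟩ := (hasCompactSupport_hLap X hgc).exists_bound_of_continuous
    (continuous_hLap hX hg)
  choose L hL using fun i ↦ (hasCompactSupport_vderiv (X i) hgc).exists_bound_of_continuous
    (continuous_vderiv (hX i).continuous (hg.of_le one_le_two))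
  refine ⟨|σ| * K + ∑ i, M * L i, fun l ⟨hl, hl1⟩ B x hB ↦ ?_⟩
  simp_rw [Real.norm_eq_abs] at hK hL
  have hdiffusion : |σ * (l ^ 2 * hLap X g (dil w l x))| ≤ |σ| * K * l := by
    have hl2 : l ^ 2 ≤ l := by nlinarith
    rw [abs_mul, abs_mul, abs_of_nonneg (sq_nonneg l), mul_assoc, mul_comm K]
    gcongr
    exact hK _
  have hdrift : |∑ i, B x i * (l * vderiv (X i) g (dil w l x))| ≤ (∑ i, M * L i) * l := by
    rw [Finset.sum_mul]
    refine (Finset.abs_sum_le_sum_abs _ _).trans (Finset.sum_le_sum fun i _ ↦ ?_)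
    have hM : 0 ≤ M := (abs_nonneg _).trans (hB i)
    rw [abs_mul, abs_mul, abs_of_pos hl, mul_assoc, mul_comm (L i)]
    gcongr
    exacts [hB i, hL i _]
  simp_rw [fokkerPlanckAdjoint, hLap_comp_dil hX hXhom hl hg,
    vderiv_comp_dil (hXhom _) hl (hg.differentiable two_ne_zero)]
  rw [add_mul]
  exact (abs_sub _ _).trans (add_le_add hdiffusion hdrift)

lemma tendsto_integral_mul_comp_dil (hw : ∀ i, 0 < w i) (hf : Integrable f) (hg : Continuous g)
    {K : ℝ} (hgK : ∀ x, |g x| ≤ K) :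
    Filter.Tendsto (fun l ↦ ∫ x, f x * g (dil w l x)) (nhds 0) (nhds (∫ x, f x * g 0)) := by
  refine tendsto_integral_filter_of_dominated_convergence (fun x ↦ |f x| * K) ?_ ?_
    (hf.abs.mul_const K) ?_
  · exact .of_forall fun l ↦ hf.aestronglyMeasurable.mul
      (hg.comp (contDiff_dil w l (n := 0)).continuous).aestronglyMeasurable
  · refine .of_forall fun l ↦ .of_forall fun x ↦ ?_
    rw [Real.norm_eq_abs, abs_mul]
    gcongr
    exact hgK _
  · refine .of_forall fun x ↦ ?_
    have hcont : Continuous (fun l ↦ f x * g (dil w l x)) :=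
      continuous_const.mul (hg.comp (continuous_dil_left w x))
    simpa only [dil_zero hw] using hcont.tendsto 0

end Dilations

section FokkerPlanck

variable {d m : ℕ} {X : Fin m → (Fin d → ℝ) → (Fin d → ℝ)} {σ T : ℝ}
  {b : ℝ → (Fin d → ℝ) → Fin m → ℝ} {ρ : ℝ → (Fin d → ℝ) → ℝ}

/-- Classical solutions on `[0, T] × ℝ^d` of the Fokker–Planck equation
`∂_t ρ = σ Δ_G ρ + div_G (b ρ)`: continuous up to the boundary times, with the equation holding
pointwise at interior times. -/
structure IsFokkerPlanckSolution (X : Fin m → (Fin d → ℝ) → (Fin d → ℝ)) (σ T : ℝ)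
    (b : ℝ → (Fin d → ℝ) → Fin m → ℝ) (ρ : ℝ → (Fin d → ℝ) → ℝ) : Prop where
  continuousOn : ContinuousOn (fun p : ℝ × (Fin d → ℝ) ↦ ρ p.1 p.2) (Icc 0 T ×ˢ univ)
  differentiableAt : ∀ x, ∀ t ∈ Ioo 0 T, DifferentiableAt ℝ (fun s ↦ ρ s x) t
  contDiff : ∀ t ∈ Ioo 0 T, ContDiff ℝ 2 (ρ t)
  continuousOn_deriv : ContinuousOn
    (fun p : ℝ × (Fin d → ℝ) ↦ deriv (fun s ↦ ρ s p.2) p.1) (Ioo 0 T ×ˢ univ)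
  deriv_eq : ∀ t ∈ Ioo 0 T, ∀ x,
    deriv (fun s ↦ ρ s x) t = σ * hLap X (ρ t) x + hdiv X (fun y i ↦ b t y i * ρ t y) x

namespace IsFokkerPlanckSolution

lemma continuousOn_integral_mul (hρ : IsFokkerPlanckSolution X σ T b ρ) {g : (Fin d → ℝ) → ℝ}
    (hg : Continuous g) (hgc : HasCompactSupport g) :
    ContinuousOn (fun t ↦ ∫ x, ρ t x * g x) (Icc 0 T) :=
  continuousOn_integral_of_compact_support hgc
    (hρ.continuousOn.mul (hg.comp continuous_snd).continuousOn)
    fun t x _ hx ↦ by rw [image_eq_zero_of_notMem_tsupport hx, mul_zero]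

lemma hasDerivAt_integral_mul (hρ : IsFokkerPlanckSolution X σ T b ρ)
    (hX : ∀ i, ContDiff ℝ 1 (X i)) (hXdiv : ∀ i x, ediv (X i) x = 0) {t : ℝ} (ht : t ∈ Ioo 0 T)
    (hb : ∀ i, ContDiff ℝ 1 (fun y ↦ b t y i)) {g : (Fin d → ℝ) → ℝ} (hg : ContDiff ℝ 2 g)
    (hgc : HasCompactSupport g) :
    HasDerivAt (fun s ↦ ∫ x, ρ s x * g x) (∫ x, ρ t x * fokkerPlanckAdjoint X σ (b t) g x) t := by
  rw [← integral_fokkerPlanck_mul hX hXdiv σ hb (hρ.contDiff t ht) hg hgc]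
  simp_rw [← hρ.deriv_eq t ht]
  exact hasDerivAt_integral_of_compact_support (F := fun s x ↦ ρ s x * g x)
    (F' := fun s x ↦ deriv (fun r ↦ ρ r x) s * g x) isOpen_Ioo ht hgc
    (fun s hs ↦ (hρ.contDiff s hs).continuous.mul hg.continuous)
    (hρ.continuousOn_deriv.mul (hg.continuous.comp continuous_snd).continuousOn)
    (fun s hs x ↦ (hρ.differentiableAt x s hs).hasDerivAt.mul_const _)
    fun s _ x hx ↦ by rw [image_eq_zero_of_notMem_tsupport hx, mul_zero]

lemma abs_integral_mul_sub_le (hρ : IsFokkerPlanckSolution X σ T b ρ)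
    (hX : ∀ i, ContDiff ℝ 1 (X i)) (hXdiv : ∀ i x, ediv (X i) x = 0)
    (hb : ∀ t ∈ Ioo 0 T, ∀ i, ContDiff ℝ 1 (fun y ↦ b t y i))
    (hρint : ∀ t ∈ Ioo 0 T, Integrable (ρ t)) {M : ℝ}
    (hρM : ∀ t ∈ Ioo 0 T, ∫ x, |ρ t x| ≤ M) {g : (Fin d → ℝ) → ℝ} (hg : ContDiff ℝ 2 g)
    (hgc : HasCompactSupport g) {ε : ℝ}
    (hε : ∀ t ∈ Ioo 0 T, ∀ x, |fokkerPlanckAdjoint X σ (b t) g x| ≤ ε) {t : ℝ}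
    (ht : t ∈ Icc 0 T) :
    |(∫ x, ρ t x * g x) - ∫ x, ρ 0 x * g x| ≤ ε * M * t := by
  obtain rfl | ht0 := ht.1.eq_or_lt
  · simp
  have hIoo {s : ℝ} (hs : s ∈ Ioo 0 t) : s ∈ Ioo 0 T := ⟨hs.1, hs.2.trans_le ht.2⟩
  obtain ⟨s, hs, hslope⟩ := exists_hasDerivAt_eq_slope (fun r ↦ ∫ x, ρ r x * g x)
    (fun r ↦ ∫ x, ρ r x * fokkerPlanckAdjoint X σ (b r) g x) ht0
    ((hρ.continuousOn_integral_mul hg.continuous hgc).mono (Icc_subset_Icc_right ht.2))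
    fun r hr ↦ hρ.hasDerivAt_integral_mul hX hXdiv (hIoo hr) (hb r (hIoo hr)) hg hgc
  have hε0 : 0 ≤ ε := (abs_nonneg _).trans (hε s (hIoo hs) 0)
  have hderiv : |∫ x, ρ s x * fokkerPlanckAdjoint X σ (b s) g x| ≤ ε * M :=
    calc |∫ x, ρ s x * fokkerPlanckAdjoint X σ (b s) g x|
      _ ≤ ∫ x, |ρ s x| * ε :=
        norm_integral_le_of_norm_le ((hρint s (hIoo hs)).abs.mul_const ε) <| .of_forall fun x ↦ by
          rw [Real.norm_eq_abs, abs_mul]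
          gcongr
          exact hε s (hIoo hs) x
      _ = ε * ∫ x, |ρ s x| := by rw [integral_mul_const, mul_comm]
      _ ≤ ε * M := by gcongr; exact hρM s (hIoo hs)
  rwa [hslope, sub_zero, abs_div, abs_of_pos ht0, div_le_iff₀ ht0] at hderiv

end IsFokkerPlanckSolution

theorem fokkerPlanck_mass_conservation_general {w : Fin d → ℕ} (hw : ∀ i, 0 < w i)
    (hX : ∀ i, ContDiff ℝ 1 (X i)) (hXdiv : ∀ i x, ediv (X i) x = 0)
    (hXhom : ∀ i, homogOne w (X i)) {Mb : ℝ} (hbMb : ∀ t ∈ Ioo 0 T, ∀ x i, |b t x i| ≤ Mb)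
    (hb : ∀ t ∈ Ioo 0 T, ∀ i, ContDiff ℝ 1 (fun y ↦ b t y i))
    (hρ : IsFokkerPlanckSolution X σ T b ρ) (hρint : ∀ t ∈ Icc 0 T, Integrable (ρ t)) {M : ℝ}
    (hρM : ∀ t ∈ Ioo 0 T, ∫ x, |ρ t x| ≤ M) {t : ℝ} (ht : t ∈ Icc 0 T) :
    ∫ x, ρ t x = ∫ x, ρ 0 x := by
  let χ : ContDiffBump (0 : Fin d → ℝ) := ⟨1, 2, one_pos, one_lt_two⟩
  obtain ⟨C, hC⟩ := exists_abs_fokkerPlanckAdjoint_comp_dil_le hX hXhom χ.contDiff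
    χ.hasCompactSupport σ Mb
  have hlim : ∀ s ∈ Icc 0 T, Filter.Tendsto (fun l ↦ ∫ x, ρ s x * χ (dil w l x))
      (nhdsWithin 0 (Ioi 0)) (nhds (∫ x, ρ s x)) := fun s hs ↦ by
    have hχ0 : χ 0 = 1 := χ.eventuallyEq_one.eq_of_nhds
    simpa [hχ0] using (tendsto_integral_mul_comp_dil hw (hρint s hs) χ.continuous (K := 1)
      fun x ↦ (abs_of_nonneg χ.nonneg).trans_le χ.le_one).mono_left nhdsWithin_le_nhds
  have hincrement : ∀ᶠ l in nhdsWithin 0 (Ioi 0),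
      |(∫ x, ρ t x * χ (dil w l x)) - ∫ x, ρ 0 x * χ (dil w l x)| ≤ C * l * M * t := by
    filter_upwards [Ioc_mem_nhdsGT one_pos] with l hl
    exact hρ.abs_integral_mul_sub_le hX hXdiv hb (fun s hs ↦ hρint s (Ioo_subset_Icc_self hs)) hρM
      (χ.contDiff.comp (contDiff_dil w l))
      (hasCompactSupport_comp_dil w hl.1.ne' χ.hasCompactSupport)
      (fun s hs x ↦ hC l hl (b s) x (hbMb s hs x)) ht
  have hzero : Filter.Tendsto (fun l ↦ C * l * M * t) (nhdsWithin 0 (Ioi 0)) (nhds 0) := by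
    have hcont : Continuous (fun l : ℝ ↦ C * l * M * t) := by fun_prop
    simpa using (hcont.tendsto 0).mono_left (nhdsWithin_le_nhds (s := Ioi 0))
  have h0 : (0 : ℝ) ∈ Icc 0 T := ⟨le_rfl, ht.1.trans ht.2⟩
  exact sub_eq_zero.1 <| abs_nonpos_iff.1 <|
    le_of_tendsto_of_tendsto ((hlim t ht).sub (hlim 0 h0)).abs hzero hincrement

end FokkerPlanck

/-- Mass conservation for bounded classical solutions of the Fokker–Planck
equation `∂_t ρ = σ Δ_G ρ + div_G(b ρ)` on `(0,T) × ℝ^d`. -/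
theorem fokkerPlanck_mass_conservation {d m : ℕ} (hd : 0 < d) (hm : 0 < m)
    (w : Fin d → ℕ) (hw : ∀ i, 0 < w i)
    (X : Fin m → (Fin d → ℝ) → (Fin d → ℝ)) (hXsm : ∀ i, ContDiff ℝ (⊤ : ℕ∞) (X i))
    (hXdivfree : ∀ i x, ediv (X i) x = 0)
    (hXhom : ∀ i, homogOne w (X i))
    (σ T : ℝ) (hσ : 0 < σ) (hT : 0 < T)
    (b : ℝ → (Fin d → ℝ) → Fin m → ℝ) (Mb : ℝ)
    (hbcont : Continuous (fun p : ℝ × (Fin d → ℝ) => b p.1 p.2))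
    (hbbd : ∀ t ∈ Set.Icc (0:ℝ) T, ∀ x i, |b t x i| ≤ Mb)
    (hbC1 : ∀ t ∈ Set.Icc (0:ℝ) T, ∀ i, ContDiff ℝ 1 (fun y => b t y i))
    (ρ : ℝ → (Fin d → ℝ) → ℝ) (Mρ : ℝ)
    (hρcont : ContinuousOn (fun p : ℝ × (Fin d → ℝ) => ρ p.1 p.2) (Set.Icc 0 T ×ˢ Set.univ))
    (hρbd : ∀ t ∈ Set.Icc (0:ℝ) T, ∀ x, |ρ t x| ≤ Mρ)
    (hρt : ∀ (x : Fin d → ℝ), ∀ t ∈ Set.Ioo (0:ℝ) T, DifferentiableAt ℝ (fun s => ρ s x) t)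
    (hρx : ∀ t ∈ Set.Ioo (0:ℝ) T, ContDiff ℝ 2 (ρ t))
    (hρtcont : ContinuousOn (fun p : ℝ × (Fin d → ℝ) => deriv (fun s => ρ s p.2) p.1)
        (Set.Ioo 0 T ×ˢ Set.univ))
    (hρxcont : ∀ i, ContinuousOn (fun p : ℝ × (Fin d → ℝ) => vderiv (X i) (ρ p.1) p.2)
        (Set.Ioo 0 T ×ˢ Set.univ))
    (hρxxcont : ∀ i i', ContinuousOn
        (fun p : ℝ × (Fin d → ℝ) => vderiv (X i) (vderiv (X i') (ρ p.1)) p.2)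
        (Set.Ioo 0 T ×ˢ Set.univ))
    (hPDE : ∀ t ∈ Set.Ioo (0:ℝ) T, ∀ x,
        deriv (fun s => ρ s x) t
          = σ * hLap X (ρ t) x + hdiv X (fun y i => b t y i * ρ t y) x)
    (hint : ∀ t ∈ Set.Icc (0:ℝ) T, MeasureTheory.Integrable (ρ t))
    (Mint : ℝ) (hsup : ∀ t ∈ Set.Icc (0:ℝ) T, (∫ x : Fin d → ℝ, |ρ t x|) ≤ Mint) :
    ∀ t ∈ Set.Icc (0:ℝ) T, (∫ x : Fin d → ℝ, ρ t x) = ∫ x : Fin d → ℝ, ρ 0 x := by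
  intro t ht
  have hρ : IsFokkerPlanckSolution X σ T b ρ := ⟨hρcont, hρt, hρx, hρtcont, hPDE⟩
  exact fokkerPlanck_mass_conservation_general hw (fun i ↦ (hXsm i).of_le (mod_cast le_top))
    hXdivfree hXhom (fun s hs ↦ hbbd s (Ioo_subset_Icc_self hs))
    (fun s hs ↦ hbC1 s (Ioo_subset_Icc_self hs)) hρ hint
    (fun s hs ↦ hsup s (Ioo_subset_Icc_self hs)) ht
end
end
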